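/- (Proposition 2, part 2) Let D be any disjunctive state, i a nominal, φ a hybrid formula, and j a nominal not occurring in D ⋁ (P, i : □φ). Then D ⋁ (P, i : □φ) is winning if and only if D ⋁ (P, j : ¬R(i,j) ∨ φ) is winning. -/

import Mathlib

/-- Hybrid logic formulas over nominals `ℕ` and propositional variables `ℕ`
(the two sorts are kept disjoint by the constructors). -/
inductive Form : Type where
  | prop : ℕ → Form
  | nom : ℕ → Form
  | rel : ℕ → ℕ → Form
  | and : Form → Form → Form
  | or : Form → Form → Form
  | imp : Form → Form → Form
  | neg : Form → Form
  | at_ : ℕ → Form → Form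
  | box : Form → Form
  | dia : Form → Form

/-- A model for hybrid logic: a nonempty set of worlds, an accessibility
relation, a valuation and an assignment of nominals to worlds. -/
structure Model where
  W : Type
  ne : Nonempty W
  R : W → W → Prop
  V : ℕ → W → Prop
  g : ℕ → W

/-- Satisfaction of a formula at a world of a model. -/
def sat (M : Model) : M.W → Form → Prop
  | w, .prop p => M.V p w
  | w, .nom i => M.g i = w
  | _, .rel i j => M.R (M.g i) (M.g j)
  | w, .and φ ψ => sat M w φ ∧ sat M w ψ
  | w, .or φ ψ => sat M w φ ∨ sat M w ψ
  | w, .imp φ ψ => ¬ sat M w φ ∨ sat M w ψ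
  | w, .neg φ => ¬ sat M w φ
  | _, .at_ i φ => sat M (M.g i) φ
  | w, .box φ => ∀ v, M.R w v → sat M v φ
  | w, .dia φ => ∃ v, M.R w v ∧ sat M v φ

/-- A model is named iff every world has a name, i.e. the assignment is surjective. -/
def Model.Named (M : Model) : Prop := Function.Surjective M.g

/-- A formula is valid iff it is true at every world of every model. -/
def Valid (φ : Form) : Prop := ∀ (M : Model) (w : M.W), sat M w φ

/-- Roles: `pro` means I am the proponent (`P`), `opp` that I am the opponent (`O`). -/
inductive Role : Type where
  | pro : Role
  | opp : Role

/-- Role switch. -/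
def Role.swap : Role → Role
  | .pro => .opp
  | .opp => .pro

/-- Game states of the semantic game over a named model, with worlds referred to
by their names: `loc r i φ` is `Q, i : φ` and `glob r φ` is `Q : φ`. -/
inductive NState : Type where
  | loc : Role → ℕ → Form → NState
  | glob : Role → Form → NState

/-- Elementary formulas: `p`, `i`, `R(i,j)`. -/
def Form.elem : Form → Prop
  | .prop _ => True
  | .nom _ => True
  | .rel _ _ => True
  | _ => False

/-- Elementary game states: states `Q, i : φ` with `φ` elementary (these are the
leaves of the semantic game over named models). -/
def NState.elem : NState → Prop
  | .loc _ _ φ => φ.elem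
  | .glob _ _ => False

/-- States labelled "I" (where it is My choice); all other non-leaf states are labelled "Y". -/
def NState.myTurn : NState → Prop
  | .loc .pro _ (.or _ _) => True
  | .loc .pro _ (.imp _ _) => True
  | .loc .pro _ (.neg _) => True
  | .loc .pro _ (.at_ _ _) => True
  | .loc .pro _ (.dia _) => True
  | .loc .opp _ (.and _ _) => True
  | .loc .opp _ (.box _) => True
  | .glob .opp _ => True
  | _ => False

/-- The (model-independent) child relation of the semantic game over named models,
using the reformulated rules `(R_□)`, `(R_◇)` and `(R_U)`:
`NChild s t` says that `t` is a child of `s` in the game tree. -/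
inductive NChild : NState → NState → Prop where
  | orL (r i φ ψ) : NChild (.loc r i (.or φ ψ)) (.loc r i φ)
  | orR (r i φ ψ) : NChild (.loc r i (.or φ ψ)) (.loc r i ψ)
  | andL (r i φ ψ) : NChild (.loc r i (.and φ ψ)) (.loc r i φ)
  | andR (r i φ ψ) : NChild (.loc r i (.and φ ψ)) (.loc r i ψ)
  | impL (r i φ ψ) : NChild (.loc r i (.imp φ ψ)) (.loc r.swap i φ)
  | impR (r i φ ψ) : NChild (.loc r i (.imp φ ψ)) (.loc r i ψ)
  | neg (r i φ) : NChild (.loc r i (.neg φ)) (.loc r.swap i φ)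
  | at_ (r i j φ) : NChild (.loc r i (.at_ j φ)) (.loc r j φ)
  | box (r i φ) (j : ℕ) : NChild (.loc r i (.box φ)) (.loc r j (.or (.neg (.rel i j)) φ))
  | dia (r i φ) (j : ℕ) : NChild (.loc r i (.dia φ)) (.loc r j (.and (.rel i j) φ))
  | glob (r φ) (i : ℕ) : NChild (.glob r φ) (.loc r i φ)

/-- The label of an elementary leaf state in the game over the model `M`:
"I" iff the corresponding elementary claim is correct. -/
def elemIWin (M : Model) : NState → Prop
  | .loc .pro i φ => sat M (M.g i) φ
  | .loc .opp i φ => ¬ sat M (M.g i) φ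
  | .glob _ _ => False

/-- I have a winning strategy for the semantic game `G(M, s)` over a named model:
at "I"-nodes I keep one child, at "Y"-nodes all children, and all leaves are labelled "I". -/
inductive IWinsN (M : Model) : NState → Prop where
  | leaf {s} : s.elem → elemIWin M s → IWinsN M s
  | move {s t} : s.myTurn → NChild s t → IWinsN M t → IWinsN M s
  | resp {s} : ¬ s.myTurn → ¬ s.elem → (∀ t, NChild s t → IWinsN M t) → IWinsN M s

/-- You have a winning strategy for the semantic game `G(M, s)` over a named model:
at "Y"-nodes You keep one child, at "I"-nodes all children, and all leaves are labelled "Y". -/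
inductive YWinsN (M : Model) : NState → Prop where
  | leaf {s} : s.elem → ¬ elemIWin M s → YWinsN M s
  | move {s t} : ¬ s.myTurn → NChild s t → YWinsN M t → YWinsN M s
  | resp {s} : s.myTurn → (∀ t, NChild s t → YWinsN M t) → YWinsN M s

/-- A disjunctive state: a finite multiset of game states. -/
abbrev DState : Type := Multiset NState

/-- A disjunctive state is elementary iff all its game states are. -/
def DElem (D : DState) : Prop := ∀ s ∈ D, s.elem

/-- A regulation function maps every non-elementary disjunctive state to one of
its non-elementary game states. -/
def IsRegulation (ρ : DState → NState) : Prop :=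
  ∀ D : DState, ¬ DElem D → ρ D ∈ D ∧ ¬ (ρ D).elem

/-- `D` is game valid: for every named model `M` there is a member of `D` for
which I have a winning strategy in the semantic game over `M`. -/
def GameValid (D : DState) : Prop :=
  ∀ M : Model, M.Named → ∃ s ∈ D, IWinsN M s

/-- I have a winning strategy for the disjunctive game `DG(D, ρ)`.
At the state `g ⋁ D` with `ρ (g ⋁ D) = g`: if `g` is labelled "I", I either move in `g`
or duplicate `g`; if `g` is labelled "Y", You move in `g` and I must win after every move.
An elementary disjunctive state is a leaf labelled "I" (winning for Me) iff for every named
model some member of it is a leaf labelled "I" of the semantic game over that model.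
Since winning strategies are wellfounded trees, infinite plays are not winning for Me. -/
inductive DWins (ρ : DState → NState) : DState → Prop where
  | leaf {D : DState} : DElem D → (∀ M : Model, M.Named → ∃ s ∈ D, IWinsN M s) →
      DWins ρ D
  | movI {D : DState} {g g' : NState} : ρ (g ::ₘ D) = g → g.myTurn → NChild g g' →
      DWins ρ (g' ::ₘ D) → DWins ρ (g ::ₘ D)
  | dup {D : DState} {g : NState} : ρ (g ::ₘ D) = g → g.myTurn →
      DWins ρ (g ::ₘ g ::ₘ D) → DWins ρ (g ::ₘ D)
  | movY {D : DState} {g : NState} : ρ (g ::ₘ D) = g → ¬ g.myTurn → ¬ g.elem →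
      (∀ g', NChild g g' → DWins ρ (g' ::ₘ D)) → DWins ρ (g ::ₘ D)

/-- `D` is winning: there is a regulation `ρ` such that I have a winning strategy
for `DG(D, ρ)`. -/
def Winning (D : DState) : Prop :=
  ∃ ρ : DState → NState, IsRegulation ρ ∧ DWins ρ D

/-- `Form.occurs k φ`: the nominal `k` occurs in the formula `φ`. -/
def Form.occurs (k : ℕ) : Form → Prop
  | .prop _ => False
  | .nom i => i = k
  | .rel i j => i = k ∨ j = k
  | .and φ ψ => φ.occurs k ∨ ψ.occurs k
  | .or φ ψ => φ.occurs k ∨ ψ.occurs k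
  | .imp φ ψ => φ.occurs k ∨ ψ.occurs k
  | .neg φ => φ.occurs k
  | .at_ i φ => i = k ∨ φ.occurs k
  | .box φ => φ.occurs k
  | .dia φ => φ.occurs k

/-- A nominal occurs in a game state iff it occurs as its label or in its formula. -/
def NState.occurs (k : ℕ) : NState → Prop
  | .loc _ i φ => i = k ∨ φ.occurs k
  | .glob _ φ => φ.occurs k

/-- A nominal occurs in a disjunctive state iff it occurs in one of its game states. -/
def DOccurs (k : ℕ) (D : DState) : Prop := ∃ s ∈ D, s.occurs k

inductive WinF : DState → Prop where
  | leaf {D : DState} : DElem D → (∀ M : Model, M.Named → ∃ s ∈ D, IWinsN M s) → WinF D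
  | movI {D : DState} {g g' : NState} : g.myTurn → NChild g g' →
      WinF (g' ::ₘ D) → WinF (g ::ₘ D)
  | dup {D : DState} {g : NState} : g.myTurn → WinF (g ::ₘ g ::ₘ D) → WinF (g ::ₘ D)
  | movY {D : DState} {g : NState} : ¬ g.myTurn → ¬ g.elem →
      (∀ g', NChild g g' → WinF (g' ::ₘ D)) → WinF (g ::ₘ D)

inductive WinR : Ordinal.{0} → DState → Prop where
  | leaf {α} {D : DState} : DElem D → (∀ M : Model, M.Named → ∃ s ∈ D, IWinsN M s) → WinR α D
  | movI {α β} {D : DState} {g g' : NState} : g.myTurn → NChild g g' → β < α →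
      WinR β (g' ::ₘ D) → WinR α (g ::ₘ D)
  | dup {α β} {D : DState} {g : NState} : g.myTurn → β < α →
      WinR β (g ::ₘ g ::ₘ D) → WinR α (g ::ₘ D)
  | movY {α} {D : DState} {g : NState} (f : NState → Ordinal.{0}) : ¬ g.myTurn → ¬ g.elem →
      (∀ g', f g' < α) →
      (∀ g', NChild g g' → WinR (f g') (g' ::ₘ D)) → WinR α (g ::ₘ D)

theorem not_elem_of_myTurn {g : NState} (h : g.myTurn) : ¬ g.elem := by
  rcases g with ⟨r, k, φ⟩ | ⟨r, φ⟩
  · cases r <;> cases φ <;> simp_all [NState.myTurn, NState.elem, Form.elem]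
  · simp [NState.elem]

theorem WinF.rank {D : DState} (h : WinF D) : ∃ α, WinR α D := by
  induction h with
  | leaf h1 h2 => exact ⟨0, .leaf h1 h2⟩
  | movI h1 h2 _ ih =>
    obtain ⟨β, ih⟩ := ih
    exact ⟨Order.succ β, .movI h1 h2 (Order.lt_succ β) ih⟩
  | dup h1 _ ih =>
    obtain ⟨β, ih⟩ := ih
    exact ⟨Order.succ β, .dup h1 (Order.lt_succ β) ih⟩
  | @movY D g h1 h2 _ ih =>
    have : ∀ g', ∃ β, NChild g g' → WinR β (g' ::ₘ D) := by
      intro g'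
      by_cases hc : NChild g g'
      · obtain ⟨β, hb⟩ := ih g' hc
        exact ⟨β, fun _ => hb⟩
      · exact ⟨0, fun h => absurd h hc⟩
    choose f hf using this
    exact ⟨Order.succ (⨆ g', f g'), .movY f h1 h2
      (fun g' => Order.lt_succ_of_le (Ordinal.le_iSup f g')) hf⟩

def StepD (S : DState → Prop) (g : NState) (E : DState) : Prop :=
  (g.myTurn ∧ ((∃ g', NChild g g' ∧ S (g' ::ₘ E)) ∨ S (g ::ₘ g ::ₘ E))) ∨
  (¬ g.myTurn ∧ ¬ g.elem ∧ ∀ g', NChild g g' → S (g' ::ₘ E))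

theorem StepD.not_elem {S g E} (h : StepD S g E) : ¬ g.elem := by
  rcases h with h | h
  · exact not_elem_of_myTurn h.1
  · exact h.2.1

theorem WinR.step {α : Ordinal.{0}} {D : DState} (h : WinR α D) :
    (DElem D ∧ ∀ M : Model, M.Named → ∃ s ∈ D, IWinsN M s) ∨
    ∃ g E, D = g ::ₘ E ∧ StepD (fun D' => ∃ β < α, WinR β D') g E := by
  cases h with
  | leaf h1 h2 => exact .inl ⟨h1, h2⟩
  | movI h1 h2 h3 h4 => exact .inr ⟨_, _, rfl, .inl ⟨h1, .inl ⟨_, h2, _, h3, h4⟩⟩⟩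
  | dup h1 h3 h4 => exact .inr ⟨_, _, rfl, .inl ⟨h1, .inr ⟨_, h3, h4⟩⟩⟩
  | movY f h1 h2 h3 h4 =>
    exact .inr ⟨_, _, rfl, .inr ⟨h1, h2, fun g' hc => ⟨_, h3 g', h4 g' hc⟩⟩⟩

noncomputable def rkD (D : DState) : Ordinal.{0} := sInf {α | WinR α D}

theorem rkD_mem {α} {D : DState} (h : WinR α D) : WinR (rkD D) D :=
  csInf_mem (s := {α | WinR α D}) ⟨α, h⟩

theorem rkD_le {α} {D : DState} (h : WinR α D) : rkD D ≤ α :=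
  csInf_le' (s := {α | WinR α D}) h

def GoodG (D : DState) (g : NState) : Prop :=
  ∃ E, D = g ::ₘ E ∧ StepD (fun D' => ∃ β < rkD D, WinR β D') g E

open Classical in
noncomputable def rhoD (D : DState) : NState :=
  if h : ∃ g, GoodG D g then h.choose
  else if h : ∃ g ∈ D, ¬ g.elem then h.choose else .glob .pro (.prop 0)

theorem rhoD_reg : IsRegulation rhoD := by
  intro D hD
  unfold rhoD
  split_ifs with h1 h2
  · obtain ⟨E, h, hs⟩ := h1.choose_spec
    refine ⟨?_, hs.not_elem⟩
    generalize h1.choose = g0 at h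
    rw [h]
    exact Multiset.mem_cons_self _ _
  · exact h2.choose_spec
  · simp only [DElem, not_forall] at hD
    obtain ⟨s, hs, hn⟩ := hD
    exact absurd ⟨s, hs, hn⟩ h2

theorem WinR.dwins : ∀ (α : Ordinal.{0}) (D : DState), rkD D = α → (∃ β, WinR β D) →
    DWins rhoD D := by
  intro α
  induction α using WellFoundedLT.induction with
  | ind α ih =>
  intro D hα ⟨β, hw⟩
  have key : ∀ D', (∃ β < rkD D, WinR β D') → DWins rhoD D' := by
    rintro D' ⟨β, hb, hw'⟩
    exact ih (rkD D') (hα ▸ (rkD_le hw').trans_lt hb) D' rfl ⟨β, hw'⟩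
  rcases (rkD_mem hw).step with h | ⟨g, E, h, hs⟩
  · exact .leaf h.1 h.2
  · have hex : ∃ g, GoodG D g := ⟨g, E, h, hs⟩
    have hr : rhoD D = hex.choose := by unfold rhoD; rw [dif_pos hex]
    obtain ⟨E', h', hs'⟩ := hex.choose_spec
    generalize hex.choose = g0 at *
    generalize rkD D = r at *
    subst h'
    rcases hs' with ⟨hm, ⟨g', hc, hw⟩ | hw⟩ | ⟨hm, he, hw⟩
    · exact .movI hr hm hc (key _ hw)
    · exact .dup hr hm (key _ hw)
    · exact .movY hr hm he fun g' hc => key _ (hw g' hc)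

theorem winning_iff {D : DState} : Winning D ↔ WinF D := by
  constructor
  · rintro ⟨ρ, _, h⟩
    induction h with
    | leaf h1 h2 => exact .leaf h1 h2
    | movI _ h1 h2 _ ih => exact .movI h1 h2 ih
    | dup _ h1 _ ih => exact .dup h1 ih
    | movY _ h1 h2 _ ih => exact .movY h1 h2 ih
  · intro h
    exact ⟨rhoD, rhoD_reg, WinR.dwins _ D rfl h.rank⟩

theorem WinF.inv {D0 : DState} (h : WinF D0) : ∀ {g g' : NState} {D : DState}, D0 = g ::ₘ D →
    ¬ g.myTurn → NChild g g' → ¬ g.elem → WinF (g' ::ₘ D) := by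
  induction h with
  | leaf h1 h2 =>
    intro g g' D e hm hc he
    subst e
    exact absurd (h1 g (Multiset.mem_cons_self _ _)) he
  | @movI E k k' h1 h2 _ ih =>
    intro g g' D e hm hc he
    rcases Multiset.cons_eq_cons.1 e with ⟨rfl, _⟩ | ⟨_, F, rfl, rfl⟩
    · exact absurd h1 hm
    · rw [Multiset.cons_swap]
      refine .movI h1 h2 ?_
      rw [Multiset.cons_swap]
      exact ih (Multiset.cons_swap _ _ _) hm hc he
  | @dup E k h1 _ ih =>
    intro g g' D e hm hc he
    rcases Multiset.cons_eq_cons.1 e with ⟨rfl, _⟩ | ⟨_, F, rfl, rfl⟩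
    · exact absurd h1 hm
    · rw [Multiset.cons_swap]
      refine .dup h1 ?_
      have := ih (g := g) (g' := g') (D := k ::ₘ k ::ₘ F)
        (by rw [Multiset.cons_swap k g F, Multiset.cons_swap k g]) hm hc he
      rwa [Multiset.cons_swap k g' F, Multiset.cons_swap k g']
  | @movY E k h1 h2 h3 ih =>
    intro g g' D e hm hc he
    rcases Multiset.cons_eq_cons.1 e with ⟨rfl, rfl⟩ | ⟨_, F, rfl, rfl⟩
    · exact h3 g' hc
    · rw [Multiset.cons_swap]
      refine .movY h1 h2 fun k' hk => ?_
      rw [Multiset.cons_swap]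
      exact ih k' hk (Multiset.cons_swap _ _ _) hm hc he

def Form.ren (σ : ℕ → ℕ) : Form → Form
  | .prop p => .prop p
  | .nom i => .nom (σ i)
  | .rel i j => .rel (σ i) (σ j)
  | .and φ ψ => .and (φ.ren σ) (ψ.ren σ)
  | .or φ ψ => .or (φ.ren σ) (ψ.ren σ)
  | .imp φ ψ => .imp (φ.ren σ) (ψ.ren σ)
  | .neg φ => .neg (φ.ren σ)
  | .at_ i φ => .at_ (σ i) (φ.ren σ)
  | .box φ => .box (φ.ren σ)
  | .dia φ => .dia (φ.ren σ)

def NState.ren (σ : ℕ → ℕ) : NState → NState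
  | .loc r i φ => .loc r (σ i) (φ.ren σ)
  | .glob r φ => .glob r (φ.ren σ)

theorem ren_elem (σ) (s : NState) : (s.ren σ).elem ↔ s.elem := by
  rcases s with ⟨r, k, φ⟩ | ⟨r, φ⟩
  · cases φ <;> simp [NState.ren, Form.ren, NState.elem, Form.elem]
  · simp [NState.ren, NState.elem]

theorem ren_myTurn (σ) (s : NState) : (s.ren σ).myTurn ↔ s.myTurn := by
  rcases s with ⟨r, k, φ⟩ | ⟨r, φ⟩
  · cases r <;> cases φ <;> simp [NState.ren, Form.ren, NState.myTurn]
  · cases r <;> simp [NState.ren, NState.myTurn]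

theorem ren_child (σ) {s t : NState} (h : NChild s t) : NChild (s.ren σ) (t.ren σ) := by
  cases h <;> simp only [NState.ren, Form.ren] <;> constructor

theorem ren_child_inv {σ : ℕ → ℕ} (hσ : Function.Surjective σ) {s u : NState}
    (h : NChild (s.ren σ) u) : ∃ t, NChild s t ∧ u = t.ren σ := by
  rcases s with ⟨r, k, φ⟩ | ⟨r, φ⟩
  · cases φ <;> simp only [NState.ren, Form.ren] at h <;> cases h
    case box.box φ j =>
      obtain ⟨j, rfl⟩ := hσ j
      exact ⟨_, .box r k φ j, rfl⟩
    case dia.dia φ j =>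
      obtain ⟨j, rfl⟩ := hσ j
      exact ⟨_, .dia r k φ j, rfl⟩
    all_goals first
      | exact ⟨_, .orL _ _ _ _, rfl⟩
      | exact ⟨_, .orR _ _ _ _, rfl⟩
      | exact ⟨_, .andL _ _ _ _, rfl⟩
      | exact ⟨_, .andR _ _ _ _, rfl⟩
      | exact ⟨_, .impL _ _ _ _, rfl⟩
      | exact ⟨_, .impR _ _ _ _, rfl⟩
      | exact ⟨_, .neg _ _ _, rfl⟩
      | exact ⟨_, .at_ _ _ _ _, rfl⟩
  · simp only [NState.ren] at h
    cases h with
    | glob _ _ j =>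
      obtain ⟨j, rfl⟩ := hσ j
      exact ⟨_, .glob r φ j, rfl⟩

def Model.pull (M : Model) (σ : ℕ → ℕ) : Model := { M with g := M.g ∘ σ }

theorem elem_pull {M : Model} {σ : ℕ → ℕ} {s : NState} (hs : s.elem)
    (h : IWinsN (M.pull σ) s) : IWinsN M (s.ren σ) := by
  have h2 : elemIWin (M.pull σ) s := by
    cases h with
    | leaf _ h => exact h
    | move h _ _ => exact absurd hs (not_elem_of_myTurn h)
    | resp _ h _ => exact absurd hs h
  refine .leaf ((ren_elem σ s).2 hs) ?_
  rcases s with ⟨r, k, φ⟩ | ⟨r, φ⟩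
  · cases φ <;> simp [NState.elem, Form.elem] at hs <;> cases r <;> exact h2
  · exact absurd hs (by simp [NState.elem])

theorem WinF.ren {σ : ℕ → ℕ} (hσ : Function.Surjective σ) {D : DState} (h : WinF D) :
    WinF (D.map (NState.ren σ)) := by
  induction h with
  | @leaf D h1 h2 =>
    refine .leaf ?_ ?_
    · intro s hs
      obtain ⟨t, ht, rfl⟩ := Multiset.mem_map.1 hs
      exact (ren_elem σ t).2 (h1 t ht)
    · intro M hM
      obtain ⟨s, hs, hw⟩ := h2 (M.pull σ) (show Function.Surjective (M.g ∘ σ) from Function.Surjective.comp hM hσ)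
      exact ⟨_, Multiset.mem_map_of_mem _ hs, elem_pull (h1 s hs) hw⟩
  | movI h1 h2 _ ih =>
    rw [Multiset.map_cons] at ih ⊢
    exact .movI ((ren_myTurn σ _).2 h1) (ren_child σ h2) ih
  | dup h1 _ ih =>
    rw [Multiset.map_cons, Multiset.map_cons] at ih
    rw [Multiset.map_cons]
    exact .dup ((ren_myTurn σ _).2 h1) ih
  | movY h1 h2 _ ih =>
    rw [Multiset.map_cons]
    refine .movY (mt (ren_myTurn σ _).1 h1) (mt (ren_elem σ _).1 h2) fun u hu => ?_
    obtain ⟨t, ht, rfl⟩ := ren_child_inv hσ hu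
    have := ih t ht
    rwa [Multiset.map_cons] at this

theorem Form.ren_id {σ : ℕ → ℕ} (φ : Form) (h : ∀ k, φ.occurs k → σ k = k) : φ.ren σ = φ := by
  induction φ <;> simp_all [Form.ren, Form.occurs]

theorem NState.ren_id {σ : ℕ → ℕ} (s : NState) (h : ∀ k, s.occurs k → σ k = k) :
    s.ren σ = s := by
  rcases s with ⟨r, k, φ⟩ | ⟨r, φ⟩
  · simp only [NState.ren]
    rw [h k (.inl rfl), Form.ren_id φ fun k hk => h k (.inr hk)]
  · simp only [NState.ren]
    rw [Form.ren_id φ fun k hk => h k hk]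

theorem Form.bdd (φ : Form) : ∃ N, ∀ k, φ.occurs k → k < N := by
  induction φ with
  | prop p => exact ⟨0, fun k h => h.elim⟩
  | nom i => exact ⟨i + 1, fun k h => by simp only [Form.occurs] at h; omega⟩
  | rel i j => exact ⟨i + j + 1, fun k h => by simp only [Form.occurs] at h; omega⟩
  | neg φ ih => exact ih
  | box φ ih => exact ih
  | dia φ ih => exact ih
  | at_ i φ ih =>
    obtain ⟨N, ih⟩ := ih
    refine ⟨N + i + 1, fun k h => ?_⟩
    rcases h with h | h
    · omega
    · have := ih k h; omega
  | and φ ψ ih1 ih2 | or φ ψ ih1 ih2 | imp φ ψ ih1 ih2 =>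
    obtain ⟨N, ih1⟩ := ih1
    obtain ⟨N', ih2⟩ := ih2
    refine ⟨N + N', fun k h => ?_⟩
    rcases h with h | h
    · have := ih1 k h; omega
    · have := ih2 k h; omega

theorem NState.bdd (s : NState) : ∃ N, ∀ k, s.occurs k → k < N := by
  rcases s with ⟨r, i, φ⟩ | ⟨r, φ⟩
  · exact Form.bdd (.at_ i φ)
  · exact Form.bdd φ

theorem DState_bdd (D : DState) : ∃ N, ∀ k, DOccurs k D → k < N := by
  induction D using Multiset.induction with
  | empty => exact ⟨0, fun k ⟨s, hs, _⟩ => absurd hs (Multiset.notMem_zero s)⟩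
  | cons s D ih =>
    obtain ⟨N, ih⟩ := ih
    obtain ⟨N', h'⟩ := s.bdd
    refine ⟨N + N', fun k ⟨t, ht, ho⟩ => ?_⟩
    rcases Multiset.mem_cons.1 ht with rfl | ht
    · have := h' k ho; omega
    · have := ih k ⟨t, ht, ho⟩; omega

theorem winning_box_iff_winning_fresh (D : DState) (i j : ℕ) (φ : Form)
    (hj : ¬ DOccurs j (NState.loc .pro i (.box φ) ::ₘ D)) :
    Winning (NState.loc .pro i (.box φ) ::ₘ D) ↔
      Winning (NState.loc .pro j (.or (.neg (.rel i j)) φ) ::ₘ D) := by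
  rw [winning_iff, winning_iff]
  constructor
  · intro h
    exact h.inv rfl (by simp [NState.myTurn]) (.box _ _ _ _) (by simp [NState.elem, Form.elem])
  · intro h
    refine .movY (by simp [NState.myTurn]) (by simp [NState.elem, Form.elem]) ?_
    intro g' hc
    cases hc with
    | box _ _ _ k =>
    obtain ⟨N, hN⟩ := DState_bdd (NState.loc .pro i (.box φ) ::ₘ D)
    let σ : ℕ → ℕ := fun n => if n = j then k else if n < N + j + 1 then n else n - (N + j + 1)
    have hσ : Function.Surjective σ := by
      intro n
      refine ⟨n + (N + j + 1), ?_⟩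
      simp only [σ]
      rw [if_neg (by omega), if_neg (by omega)]
      omega
    have hid : ∀ n, DOccurs n (NState.loc .pro i (.box φ) ::ₘ D) → σ n = n := by
      intro n hn
      have h1 : n ≠ j := by rintro rfl; exact hj hn
      have h2 := hN n hn
      simp only [σ]
      rw [if_neg h1, if_pos (by omega)]
    have hσj : σ j = k := by simp [σ]
    have hσi : σ i = i := hid i ⟨_, Multiset.mem_cons_self _ _, .inl rfl⟩
    have hφ : φ.ren σ = φ :=
      Form.ren_id φ fun n hn => hid n ⟨_, Multiset.mem_cons_self _ _, .inr hn⟩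
    have hD : D.map (NState.ren σ) = D := by
      conv_rhs => rw [← Multiset.map_id D]
      refine Multiset.map_congr rfl fun s hs => ?_
      exact NState.ren_id s fun n hn => hid n ⟨s, Multiset.mem_cons_of_mem hs, hn⟩
    have := h.ren hσ
    rw [Multiset.map_cons, hD] at this
    simpa only [NState.ren, Form.ren, hσj, hσi, hφ] using this
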